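/- Let φ : ℕ → ℕ be an injective computable function. For M ≥ 4 let K_M = ∫₀^∞ g_M(α) ln α dα, define g*(α) = Σ_{M=4}^∞ 2^(−φ(M)) · g_M(α)/K_M, let c₂ = ∫₀^∞ g*(α) dα, and define f*(α) = g*(|α|)/(2c₂). Then for all computable reals P > 0 and σ² > 0, the real number x* = ∫_ℝ log₂(1 + σ²/(P·α²)) f*(α) dα (the integrand interpreted as 0 where f* vanishes, in particular on [−1,1]) is a computable real number. -/

import Mathlib

open Filter MeasureTheory

/-- A real number `x` is computable if there is a computable sequence of rationals
approximating it to precision `2^(-n)`. -/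
def IsComputableReal (x : ℝ) : Prop :=
  ∃ q : ℕ → ℚ, Computable q ∧ ∀ n : ℕ, |x - (q n : ℝ)| ≤ 2 ^ (-(n : ℤ))

/-- For `M ≥ 4`, the function `g_M` from Lemma 1 of the paper. -/
noncomputable def gM (M : ℕ) (α : ℝ) : ℝ :=
  if α ≤ 2 then 0
  else if α ≤ 3 then (α - 2) / (3 * (Real.log 3) ^ 2)
  else if α ≤ M then 1 / (α * (Real.log α) ^ 2)
  else if α ≤ M + 1 then ((M : ℝ) + 1 - α) / (M * (Real.log M) ^ 2)
  else 0

/-- `K_M = ∫₀^∞ g_M(α) ln α dα`. -/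
noncomputable def Kconst (M : ℕ) : ℝ :=
  ∫ α in Set.Ioi (0 : ℝ), gM M α * Real.log α

/-!
The weights `2 ^ (-φ k)` are computable one by one, but the rate at which their sum converges, and
hence the sum itself, need not be. What saves the computation is the normalisation: `∫ g_M` stays
bounded while `K_M ≥ log (log M / log 3)` tends to infinity, so for a bounded continuous `w` the
moments `∫ g_M w / K_M` tend to `0` at a computable rate. The tail of `∑ 2 ^ (-φ M) ∫ g_M w / K_M`
from `N` on is at most the (merely bounded) sum of all weights times that rate at `N`. The `g_M`
are Lipschitz with a common constant, so these moments are computable uniformly in `M` by Riemann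
sums with explicit error bounds. Both `c₂` (with `w = 1`) and the numerator of `x*` (with
`w = log (1 + σ² / (P α²))`) are of this form.
-/

section NatFunctions

variable {ι : Type*} [Primcodable ι] {f g : ι → ℕ}

lemma computable_nat_add (hf : Computable f) (hg : Computable g) :
    Computable fun i => f i + g i :=
  Primrec.nat_add.to_comp.comp hf hg

lemma computable_nat_sub (hf : Computable f) (hg : Computable g) :
    Computable fun i => f i - g i :=
  Primrec.nat_sub.to_comp.comp hf hg

lemma computable_nat_mul (hf : Computable f) (hg : Computable g) :
    Computable fun i => f i * g i :=
  Primrec.nat_mul.to_comp.comp hf hg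

lemma computable_nat_two_pow (hf : Computable f) : Computable fun i => 2 ^ f i := by
  have hstep : Computable₂ fun (_ : ι) (x : ℕ × ℕ) => 2 * x.2 :=
    computable_nat_mul (.const 2) (Computable.snd.comp .snd)
  refine (Computable.nat_rec hf (.const 1) hstep).of_eq fun i => ?_
  induction f i with
  | zero => rfl
  | succ n ih => rw [pow_succ']; exact congrArg (2 * ·) ih

lemma computablePred_nat_le (hf : Computable f) (hg : Computable g) :
    ComputablePred fun i => f i ≤ g i :=
  Computable.computablePred <| Primrec.nat_le.decide.to_comp.comp hf hg

end NatFunctions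

section General

variable {ι α : Type*} [Primcodable ι]

lemma computablePred_eq [Primcodable α] {f g : ι → α} (hf : Computable f) (hg : Computable g) :
    ComputablePred fun i => f i = g i := by
  classical
  exact Computable.computablePred <| Primrec.eq.decide.to_comp.comp hf hg

lemma computablePred_comp {κ : Type*} [Primcodable κ] {p : ι → Prop} {f : κ → ι}
    (hp : ComputablePred p) (hf : Computable f) : ComputablePred fun k => p (f k) :=
  ComputablePred.computable_of_manyOneReducible ⟨f, hf, fun _ => Iff.rfl⟩ hp

lemma computablePred_and {p q : ι → Prop} (hp : ComputablePred p) (hq : ComputablePred q) :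
    ComputablePred fun i => p i ∧ q i := by
  classical
  exact Computable.computablePred <|
    (Primrec.and.to_comp.comp hp.decide hq.decide).of_eq fun _ => (Bool.decide_and _ _).symm

lemma computable_ite [Primcodable α] {p : ι → Prop} [DecidablePred p] {f g : ι → α}
    (hp : ComputablePred p) (hf : Computable f) (hg : Computable g) :
    Computable fun i => if p i then f i else g i :=
  (hp.decide.cond hf hg).of_eq fun _ => Bool.cond_decide _ _ _

lemma computable_of_computablePred_graph [Denumerable α] {f : ι → α}
    (h : ComputablePred fun x : ι × α => f x.1 = x.2) : Computable f := by
  classical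
  have hex : ∀ i, ∃ n, f i = Denumerable.ofNat α n := fun i =>
    ⟨Encodable.encode (f i), (Denumerable.ofNat_encode _).symm⟩
  have hfind : Computable fun i => Nat.find (hex i) :=
    Computable.find
      (computablePred_comp h (Computable.fst.pair ((Computable.ofNat α).comp .snd))) hex
  exact ((Computable.ofNat α).comp hfind).of_eq fun i => (Nat.find_spec (hex i)).symm

end General

-- The `Primcodable ℚ` of Mathlib numbers the rationals by the increasing enumeration of the codes
-- of `Rat.instEncodable`, so numerators and denominators are computable once that enumeration is.
section RationalEncoding

open Encodable

lemma computable_nth_of_computablePred (s : Set ℕ) [DecidablePred (· ∈ s)] [Infinite s]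
    (hs : ComputablePred fun m => m ∈ s) :
    Computable fun n => (Nat.Subtype.ofNat s n : ℕ) := by
  have hex : ∀ x : ℕ, ∃ m, x + m + 1 ∈ s := fun x => by
    obtain ⟨y, hy, hxy⟩ := (Set.infinite_coe_iff.1 ‹Infinite s›).exists_gt x
    exact ⟨y - x - 1, by rwa [show x + (y - x - 1) + 1 = y by lia]⟩
  have hfind : Computable fun x => Nat.find (hex x) :=
    Computable.find
      (computablePred_comp hs (Computable.succ.comp (computable_nat_add .fst .snd))) hex
  have hnext : Computable fun x => x + Nat.find (hex x) + 1 :=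
    Computable.succ.comp (computable_nat_add .id hfind)
  refine (Computable.nat_rec .id (.const (Nat.Subtype.ofNat s 0 : ℕ))
    (hnext.comp (Computable.snd.comp .snd)).to₂).of_eq fun n => ?_
  induction n with
  | zero => rfl
  | succ n ih => exact congrArg (fun x => x + Nat.find (hex x) + 1) ih

lemma computable_encode_ofNat_ofEncodableOfInfinite {α : Type*} [Encodable α] [Infinite α]
    (h : ComputablePred fun m => m ∈ Set.range (encode : α → ℕ)) :
    Computable fun n => encode
      (@Denumerable.ofNat α (Denumerable.ofEncodableOfInfinite α) n) := by
  let := decidableRangeEncode α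
  let : Infinite (Set.range (@encode α _)) :=
    Infinite.of_injective _ (Equiv.ofInjective _ encode_injective).injective
  let := Nat.Subtype.denumerable (Set.range (@encode α _))
  refine (computable_nth_of_computablePred _ h).of_eq fun n => ?_
  have hnth : Denumerable.ofNat (Set.range (@encode α _)) n
      = Nat.Subtype.ofNat (Set.range (@encode α _)) n :=
    Denumerable.ofEquiv_ofNat ℕ _ n
  have hn : @Denumerable.ofNat α (Denumerable.ofEncodableOfInfinite α) n
      = (equivRangeEncode α).symm (Nat.Subtype.ofNat (Set.range (@encode α _)) n) :=
    (Denumerable.ofEquiv_ofNat _ (equivRangeEncode α) n).trans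
      (congrArg (equivRangeEncode α).symm hnth)
  rw [hn]
  exact congrArg Subtype.val ((equivRangeEncode α).apply_symm_apply _).symm

lemma computablePred_coprime : ComputablePred fun x : ℕ × ℕ => x.1.Coprime x.2 := by
  have hmod {e : ℕ × ℕ × ℕ → ℕ} (he : Primrec e) : PrimrecPred fun x => e x % x.1 = 0 :=
    Primrec.eq.comp (Primrec.nat_mod.comp he .fst) (.const 0)
  have hcommon : PrimrecRel fun (k : ℕ) (x : ℕ × ℕ) => x.1 % k = 0 → x.2 % k = 0 → k = 1 := by
    refine (((hmod (Primrec.fst.comp .snd)).not.or (hmod (Primrec.snd.comp .snd)).not).or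
      (Primrec.eq.comp .fst (.const 1))).of_eq fun x => ?_
    tauto
  have hbounded : PrimrecPred fun x : ℕ × ℕ => ∀ k < x.1 + (x.2 + 1),
      x.1 % k = 0 → x.2 % k = 0 → k = 1 :=
    (hcommon.forall_mem_list.comp (Primrec.list_range.comp
      (Primrec.nat_add.comp .fst (Primrec.succ.comp .snd))) .id).of_eq (by simp)
  refine hbounded.computablePred.of_eq fun x => ⟨fun h => ?_, fun h k _ h₁ h₂ => ?_⟩
  · have hlt : x.1.gcd x.2 < x.1 + (x.2 + 1) := by
      rcases x.1.eq_zero_or_pos with h₀ | h₀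
      · simp [h₀]
      · exact (Nat.gcd_le_left _ h₀).trans_lt (by lia)
    exact h _ hlt (Nat.mod_eq_zero_of_dvd (Nat.gcd_dvd_left _ _))
      (Nat.mod_eq_zero_of_dvd (Nat.gcd_dvd_right _ _))
  · exact Nat.eq_one_of_dvd_coprimes h (Nat.dvd_of_mod_eq_zero h₁) (Nat.dvd_of_mod_eq_zero h₂)

lemma computable_int_toNat : Computable Int.toNat := by
  have hmod := Primrec.nat_mod.to_comp.comp (Computable.encode (α := ℤ)) (.const 2)
  have hdiv := Primrec.nat_div.to_comp.comp (Computable.encode (α := ℤ)) (.const 2)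
  refine (computable_ite (computablePred_eq hmod (.const 0)) hdiv (.const 0)).of_eq fun z => ?_
  cases z with
  | ofNat n =>
    change (if 2 * n % 2 = 0 then 2 * n / 2 else 0) = n
    simp
  | negSucc n =>
    change (if (2 * n + 1) % 2 = 0 then (2 * n + 1) / 2 else 0) = 0
    simp

lemma computable_int_natAbs : Computable Int.natAbs := by
  refine (Primrec.nat_div.to_comp.comp (Computable.succ.comp (Computable.encode (α := ℤ)))
    (.const 2)).of_eq fun z => ?_
  cases z with
  | ofNat n =>
    change (2 * n + 1) / 2 = n
    lia
  | negSucc n =>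
    change (2 * n + 1 + 1) / 2 = n + 1
    lia

lemma mem_range_encode_rat (m : ℕ) :
    m ∈ Set.range (@encode ℚ Rat.instEncodable) ↔
      0 < m.unpair.2 ∧ (Denumerable.ofNat ℤ m.unpair.1).natAbs.Coprime m.unpair.2 := by
  constructor
  · rintro ⟨q, rfl⟩
    change 0 < (Nat.pair (encode q.num) q.den).unpair.2 ∧
      (Denumerable.ofNat ℤ (Nat.pair (encode q.num) q.den).unpair.1).natAbs.Coprime
        (Nat.pair (encode q.num) q.den).unpair.2
    simp only [Nat.unpair_pair, Denumerable.ofNat_encode]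
    exact ⟨q.den_pos, q.reduced⟩
  · rintro ⟨hpos, hcoprime⟩
    refine ⟨⟨Denumerable.ofNat ℤ m.unpair.1, m.unpair.2, hpos.ne', hcoprime⟩, ?_⟩
    change Nat.pair (encode (Denumerable.ofNat ℤ m.unpair.1)) m.unpair.2 = m
    rw [Denumerable.encode_ofNat, Nat.pair_unpair]

lemma computablePred_mem_range_encode_rat :
    ComputablePred fun m => m ∈ Set.range (@encode ℚ Rat.instEncodable) := by
  have hfst : Computable fun m : ℕ => m.unpair.1 := Computable.fst.comp Computable.unpair
  have hsnd : Computable fun m : ℕ => m.unpair.2 := Computable.snd.comp Computable.unpair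
  refine (computablePred_and (computablePred_nat_le (.const 1) hsnd)
    (computablePred_comp computablePred_coprime
      ((computable_int_natAbs.comp ((Computable.ofNat ℤ).comp hfst)).pair hsnd))).of_eq
      fun m => (mem_range_encode_rat m).symm

lemma computable_encode_num_pair_den :
    Computable fun q : ℚ => Nat.pair (encode q.num) q.den :=
  ((@computable_encode_ofNat_ofEncodableOfInfinite ℚ Rat.instEncodable _
    computablePred_mem_range_encode_rat).comp Computable.encode).of_eq fun q =>
      congrArg (@encode ℚ Rat.instEncodable) (Denumerable.ofNat_encode q)

lemma computable_rat_num : Computable Rat.num :=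
  ((Computable.ofNat ℤ).comp (Computable.fst.comp
    (Computable.unpair.comp computable_encode_num_pair_den))).of_eq fun q => by
      rw [Nat.unpair_pair, Denumerable.ofNat_encode]

lemma computable_rat_den : Computable Rat.den :=
  (Computable.snd.comp (Computable.unpair.comp computable_encode_num_pair_den)).of_eq fun q => by
    rw [Nat.unpair_pair]

end RationalEncoding

section RationalFunctions

variable {ι : Type*} [Primcodable ι] {p q : ι → ℚ}

lemma computable_int_neg_toNat : Computable fun z : ℤ => (-z).toNat :=
  (computable_nat_sub computable_int_natAbs computable_int_toNat).of_eq fun z => by lia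

lemma computable_fraction {a b d : ι → ℕ} (ha : Computable a)
    (hb : Computable b) (hd : Computable d) :
    Computable fun i => ((a i : ℚ) - b i) / (d i + 1) := by
  have hgraph : ComputablePred fun x : ι × ℚ =>
      a x.1 * x.2.den + (-x.2.num).toNat * (d x.1 + 1)
        = x.2.num.toNat * (d x.1 + 1) + b x.1 * x.2.den := by
    have hden := computable_rat_den.comp (Computable.snd (α := ι))
    have hnum := computable_rat_num.comp (Computable.snd (α := ι))
    have hfst : Computable (Prod.fst : ι × ℚ → ι) := .fst
    have hd' := Computable.succ.comp (hd.comp hfst)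
    exact computablePred_eq
      (computable_nat_add (computable_nat_mul (ha.comp hfst) hden)
        (computable_nat_mul (computable_int_neg_toNat.comp hnum) hd'))
      (computable_nat_add (computable_nat_mul (computable_int_toNat.comp hnum) hd')
        (computable_nat_mul (hb.comp hfst) hden))
  refine computable_of_computablePred_graph (hgraph.of_eq fun ⟨i, r⟩ => ?_)
  have hnum : (r.num.toNat : ℚ) - (-r.num).toNat = r.num := mod_cast r.num.toNat_sub_toNat_neg
  have hden : (r.den : ℚ) ≠ 0 := mod_cast r.den_nz
  have hcross : ((a i : ℚ) - b i) / (d i + 1) = r ↔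
      ((a i : ℚ) - b i) * r.den = (r.num.toNat - (-r.num).toNat) * (d i + 1) := by
    rw [hnum, ← div_eq_div_iff (by positivity) hden, Rat.num_div_den]
  rw [hcross, ← Nat.cast_inj (R := ℚ)]
  push_cast
  constructor <;> intro h <;> linarith

lemma computable_rat_iff : Computable q ↔ ∃ a b d : ι → ℕ,
    Computable a ∧ Computable b ∧ Computable d ∧ ∀ i, q i = ((a i : ℚ) - b i) / (d i + 1) := by
  refine ⟨fun hq => ⟨fun i => (q i).num.toNat, fun i => (-(q i).num).toNat,
      fun i => (q i).den - 1, computable_int_toNat.comp (computable_rat_num.comp hq),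
      computable_int_neg_toNat.comp (computable_rat_num.comp hq),
      computable_nat_sub (computable_rat_den.comp hq) (.const 1), fun i => ?_⟩,
    fun ⟨a, b, d, ha, hb, hd, h⟩ => (computable_fraction ha hb hd).of_eq fun i => (h i).symm⟩
  have hnum : ((q i).num.toNat : ℚ) - (-(q i).num).toNat = (q i).num :=
    mod_cast (q i).num.toNat_sub_toNat_neg
  rw [hnum, Nat.cast_pred (q i).den_pos, sub_add_cancel, Rat.num_div_den]

lemma computable_rat_natCast {f : ι → ℕ} (hf : Computable f) : Computable fun i => (f i : ℚ) :=
  computable_rat_iff.2 ⟨f, _, _, hf, .const 0, .const 0, fun i => by simp⟩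

lemma computable_rat_add (hp : Computable p) (hq : Computable q) :
    Computable fun i => p i + q i := by
  obtain ⟨a, b, d, ha, hb, hd, hp⟩ := computable_rat_iff.1 hp
  obtain ⟨a', b', d', ha', hb', hd', hq⟩ := computable_rat_iff.1 hq
  have hs := Computable.succ.comp hd
  have hs' := Computable.succ.comp hd'
  refine computable_rat_iff.2 ⟨_, _, _,
    computable_nat_add (computable_nat_mul ha hs') (computable_nat_mul ha' hs),
    computable_nat_add (computable_nat_mul hb hs') (computable_nat_mul hb' hs),
    computable_nat_sub (computable_nat_mul hs hs') (.const 1), fun i => ?_⟩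
  rw [hp, hq, div_add_div _ _ (by positivity) (by positivity), Nat.cast_pred (by simp)]
  push_cast
  ring

lemma computable_rat_neg (hq : Computable q) : Computable fun i => -q i := by
  obtain ⟨a, b, d, ha, hb, hd, hq⟩ := computable_rat_iff.1 hq
  exact computable_rat_iff.2 ⟨b, a, d, hb, ha, hd, fun i => by rw [hq, ← neg_div, neg_sub]⟩

lemma computable_rat_sub (hp : Computable p) (hq : Computable q) :
    Computable fun i => p i - q i :=
  (computable_rat_add hp (computable_rat_neg hq)).of_eq fun _ => (sub_eq_add_neg _ _).symm

lemma computable_rat_mul (hp : Computable p) (hq : Computable q) :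
    Computable fun i => p i * q i := by
  obtain ⟨a, b, d, ha, hb, hd, hp⟩ := computable_rat_iff.1 hp
  obtain ⟨a', b', d', ha', hb', hd', hq⟩ := computable_rat_iff.1 hq
  refine computable_rat_iff.2 ⟨_, _, _,
    computable_nat_add (computable_nat_mul ha ha') (computable_nat_mul hb hb'),
    computable_nat_add (computable_nat_mul ha hb') (computable_nat_mul hb ha'),
    computable_nat_sub (computable_nat_mul (Computable.succ.comp hd)
      (Computable.succ.comp hd')) (.const 1), fun i => ?_⟩
  rw [hp, hq, div_mul_div_comm, Nat.cast_pred (by simp)]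
  push_cast
  ring

lemma computable_rat_inv (hq : Computable q) : Computable fun i => (q i)⁻¹ := by
  have hgraph : ComputablePred fun x : ℚ × ℚ => x.1 * x.1 * x.2 = x.1 ∧ x.2 * x.2 * x.1 = x.2 :=
    computablePred_and
      (computablePred_eq (computable_rat_mul (computable_rat_mul .fst .fst) .snd) .fst)
      (computablePred_eq (computable_rat_mul (computable_rat_mul .snd .snd) .fst) .snd)
  refine (computable_of_computablePred_graph (f := fun x : ℚ => x⁻¹)
    (hgraph.of_eq fun ⟨x, y⟩ => ⟨fun ⟨hx, hy⟩ => ?_, ?_⟩)).comp hq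
  · rcases eq_or_ne x 0 with rfl | hx₀
    · simpa using hy
    · exact inv_eq_of_mul_eq_one_right (mul_left_cancel₀ hx₀ (by rw [← mul_assoc, hx, mul_one]))
  · rintro (rfl : x⁻¹ = y)
    rcases eq_or_ne x 0 with rfl | hx₀
    · simp
    · simp [hx₀]

lemma computablePred_rat_le (hp : Computable p) (hq : Computable q) :
    ComputablePred fun i => p i ≤ q i := by
  refine (computablePred_nat_le (computable_int_toNat.comp
    (computable_rat_num.comp (computable_rat_sub hp hq))) (.const 0)).of_eq fun i => ?_
  rw [Nat.le_zero, Int.toNat_eq_zero, Rat.num_nonpos, sub_nonpos]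

lemma computable_rat_max (hp : Computable p) (hq : Computable q) :
    Computable fun i => max (p i) (q i) :=
  (computable_ite (computablePred_rat_le hp hq) hq hp).of_eq fun _ => (max_def _ _).symm

lemma computable_rat_abs (hq : Computable q) : Computable fun i => |q i| :=
  computable_rat_max hq (computable_rat_neg hq)

lemma computable_rat_sum_range {q : ι → ℕ → ℚ} {n : ι → ℕ} (hq : Computable₂ q)
    (hn : Computable n) : Computable fun i => ∑ j ∈ Finset.range (n i), q i j := by
  have hstep : Computable₂ fun (i : ι) (x : ℕ × ℚ) => x.2 + q i x.1 :=
    computable_rat_add (Computable.snd.comp .snd) (hq.comp .fst (Computable.fst.comp .snd))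
  refine (Computable.nat_rec hn (.const 0) hstep).of_eq fun i => ?_
  induction n i with
  | zero => rfl
  | succ n ih => rw [Finset.sum_range_succ, ← ih]

lemma computable_rat_two_pow_neg {n : ι → ℕ} (hn : Computable n) :
    Computable fun i => (2 : ℚ) ^ (-(n i : ℤ)) :=
  (computable_rat_inv (computable_rat_natCast (computable_nat_two_pow hn))).of_eq fun i => by
    simp

end RationalFunctions

section ComputableFamily

open Topology

variable {ι κ : Type} [Primcodable ι] [Primcodable κ]

/-- Uniform computability of a family of real numbers: one computable function produces, from an
index and a precision, a rational approximation of the corresponding member of the family. For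
`ι = ℕ` these are the computable sequences of reals. -/
def ComputableFamily (f : ι → ℝ) : Prop :=
  ∃ q : ι → ℕ → ℚ, Computable₂ q ∧ ∀ i n, |f i - q i n| ≤ 2 ^ (-(n : ℤ))

lemma tendsto_two_zpow_neg_natCast :
    Tendsto (fun n : ℕ => (2 : ℝ) ^ (-(n : ℤ))) atTop (𝓝 0) := by
  simpa only [zpow_neg, zpow_natCast, ← inv_pow] using
    tendsto_pow_atTop_nhds_zero_of_lt_one (r := (2 : ℝ)⁻¹) (by norm_num) (by norm_num)

lemma tendsto_of_abs_sub_le_two_zpow {x : ℝ} {u : ℕ → ℝ}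
    (h : ∀ n : ℕ, |x - u n| ≤ 2 ^ (-(n : ℤ))) : Tendsto u atTop (𝓝 x) :=
  tendsto_iff_dist_tendsto_zero.2 <| squeeze_zero (fun _ => dist_nonneg)
    (fun n => by rw [dist_comm]; exact h n) tendsto_two_zpow_neg_natCast

namespace ComputableFamily

variable {f g : ι → ℝ}

lemma of_tendsto_zero {q e : ι → ℕ → ℚ} (hq : Computable₂ q) (he : Computable₂ e)
    (hqe : ∀ i n, |f i - q i n| ≤ e i n)
    (hlim : ∀ i, Tendsto (fun n => (e i n : ℝ)) atTop (𝓝 0)) : ComputableFamily f := by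
  have hex : ∀ x : ι × ℕ, ∃ m, e x.1 m ≤ 2 ^ (-(x.2 : ℤ)) := fun x => by
    obtain ⟨m, hm⟩ := ((hlim x.1).eventually_le_const
      (zpow_pos (two_pos (α := ℝ)) (-(x.2 : ℤ)))).exists
    exact ⟨m, (Rat.cast_le (K := ℝ)).1 (by push_cast; exact hm)⟩
  have hfind : Computable fun x => Nat.find (hex x) :=
    Computable.find (computablePred_rat_le (he.comp (Computable.fst.comp .fst) .snd)
      (computable_rat_two_pow_neg (Computable.snd.comp .fst))) hex
  refine ⟨fun i n => q i (Nat.find (hex (i, n))), hq.comp .fst hfind, fun i n => ?_⟩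
  refine (hqe i _).trans ?_
  simpa only [Rat.cast_zpow, Rat.cast_ofNat] using
    (Rat.cast_le (K := ℝ)).2 (Nat.find_spec (hex (i, n)))

lemma of_rat {q : ι → ℚ} (hq : Computable q) : ComputableFamily fun i => (q i : ℝ) :=
  ⟨fun i _ => q i, hq.comp .fst, fun i n => by simp⟩

lemma natCast {n : ι → ℕ} (hn : Computable n) : ComputableFamily fun i => (n i : ℝ) := by
  simpa using of_rat (computable_rat_natCast hn)

lemma const {x : ℝ} (hx : IsComputableReal x) : ComputableFamily fun _ : ι => x := by
  obtain ⟨q, hq, h⟩ := hx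
  exact ⟨fun _ => q, hq.comp .snd, fun _ => h⟩

lemma isComputableReal (hf : ComputableFamily f) (i : ι) : IsComputableReal (f i) := by
  obtain ⟨q, hq, h⟩ := hf
  exact ⟨q i, hq.comp (.const i) .id, h i⟩

lemma comp (hf : ComputableFamily f) {φ : κ → ι} (hφ : Computable φ) :
    ComputableFamily fun k => f (φ k) := by
  obtain ⟨q, hq, h⟩ := hf
  exact ⟨fun k => q (φ k), hq.comp (hφ.comp .fst) .snd, fun k => h (φ k)⟩

lemma congr (hf : ComputableFamily f) (hfg : ∀ i, f i = g i) : ComputableFamily g :=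
  funext hfg ▸ hf

lemma add (hf : ComputableFamily f) (hg : ComputableFamily g) :
    ComputableFamily fun i => f i + g i := by
  obtain ⟨p, hp, hfp⟩ := hf
  obtain ⟨q, hq, hgq⟩ := hg
  have hε : Computable fun x : ι × ℕ => (2 : ℚ) ^ (-(x.2 : ℤ)) :=
    computable_rat_two_pow_neg .snd
  refine of_tendsto_zero (q := fun i n => p i n + q i n)
    (e := fun _ n => 2 ^ (-(n : ℤ)) + 2 ^ (-(n : ℤ))) (computable_rat_add hp hq)
    (computable_rat_add hε hε) (fun i n => ?_) fun i => ?_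
  · push_cast
    rw [add_sub_add_comm]
    exact (abs_add_le _ _).trans (add_le_add (hfp i n) (hgq i n))
  · simpa using tendsto_two_zpow_neg_natCast.add tendsto_two_zpow_neg_natCast

lemma neg (hf : ComputableFamily f) : ComputableFamily fun i => -f i := by
  obtain ⟨q, hq, h⟩ := hf
  refine ⟨fun i n => -q i n, computable_rat_neg hq, fun i n => ?_⟩
  rw [Rat.cast_neg, neg_sub_neg, abs_sub_comm]
  exact h i n

lemma sub (hf : ComputableFamily f) (hg : ComputableFamily g) :
    ComputableFamily fun i => f i - g i := by
  simpa only [sub_eq_add_neg] using hf.add hg.neg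

lemma mul (hf : ComputableFamily f) (hg : ComputableFamily g) :
    ComputableFamily fun i => f i * g i := by
  obtain ⟨p, hp, hfp⟩ := hf
  obtain ⟨q, hq, hgq⟩ := hg
  have hε : Computable fun x : ι × ℕ => (2 : ℚ) ^ (-(x.2 : ℤ)) :=
    computable_rat_two_pow_neg .snd
  have he : Computable₂ fun i n =>
      (|p i n| + 2 ^ (-(n : ℤ))) * 2 ^ (-(n : ℤ)) + 2 ^ (-(n : ℤ)) * |q i n| :=
    computable_rat_add (computable_rat_mul (computable_rat_add (computable_rat_abs hp) hε) hε)
      (computable_rat_mul hε (computable_rat_abs hq))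
  refine of_tendsto_zero (q := fun i n => p i n * q i n) (computable_rat_mul hp hq) he
    (fun i n => ?_) fun i => ?_
  · have hf : |f i| ≤ |(p i n : ℝ)| + 2 ^ (-(n : ℤ)) := by
      linarith [hfp i n, abs_sub_abs_le_abs_sub (f i) (p i n)]
    push_cast
    calc |f i * g i - p i n * q i n|
        = |f i * (g i - q i n) + (f i - p i n) * q i n| := by ring_nf
      _ ≤ |f i| * |g i - q i n| + |f i - p i n| * |(q i n : ℝ)| := by
        simpa only [abs_mul] using abs_add_le (f i * (g i - q i n)) ((f i - p i n) * q i n)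
      _ ≤ _ := by gcongr; exacts [hgq i n, hfp i n]
  · have hp' := (tendsto_of_abs_sub_le_two_zpow (hfp i)).abs
    have hq' := (tendsto_of_abs_sub_le_two_zpow (hgq i)).abs
    have h₀ := tendsto_two_zpow_neg_natCast
    simpa using ((hp'.add h₀).mul h₀).add (h₀.mul hq')

lemma max (hf : ComputableFamily f) (hg : ComputableFamily g) :
    ComputableFamily fun i => max (f i) (g i) := by
  obtain ⟨p, hp, hfp⟩ := hf
  obtain ⟨q, hq, hgq⟩ := hg
  refine ⟨fun i n => Max.max (p i n) (q i n), computable_rat_max hp hq, fun i n => ?_⟩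
  rw [Rat.cast_max]
  exact (abs_max_sub_max_le_max _ _ _ _).trans (max_le (hfp i n) (hgq i n))

lemma min (hf : ComputableFamily f) (hg : ComputableFamily g) :
    ComputableFamily fun i => min (f i) (g i) :=
  (hf.neg.max hg.neg).neg.congr fun i => by rw [max_neg_neg, neg_neg]

lemma exists_rat_pos_le (hf : ComputableFamily f) (hpos : ∀ i, 0 < f i) :
    ∃ l : ι → ℚ, Computable l ∧ ∀ i, 0 < l i ∧ (l i : ℝ) ≤ f i := by
  obtain ⟨q, hq, hfq⟩ := hf
  have hex : ∀ i, ∃ n : ℕ, 2 * (2 : ℚ) ^ (-(n : ℤ)) ≤ q i n := fun i => by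
    have h2 : Tendsto (fun n : ℕ => 2 * (2 : ℝ) ^ (-(n : ℤ))) atTop (𝓝 0) := by
      simpa using tendsto_two_zpow_neg_natCast.const_mul 2
    obtain ⟨n, hn⟩ :=
      (h2.eventually_lt (tendsto_of_abs_sub_le_two_zpow (hfq i)) (hpos i)).exists
    exact ⟨n, (Rat.cast_le (K := ℝ)).1 (by push_cast; exact hn.le)⟩
  have hfind : Computable fun i => Nat.find (hex i) :=
    Computable.find (computablePred_rat_le
      (computable_rat_mul (.const 2) (computable_rat_two_pow_neg .snd)) hq) hex
  refine ⟨fun i => 2 ^ (-(Nat.find (hex i) : ℤ)), computable_rat_two_pow_neg hfind,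
    fun i => ⟨by positivity, ?_⟩⟩
  have hspec : 2 * (2 : ℝ) ^ (-(Nat.find (hex i) : ℤ)) ≤ q i (Nat.find (hex i)) := by
    simpa only [Rat.cast_mul, Rat.cast_zpow, Rat.cast_ofNat] using
      (Rat.cast_le (K := ℝ)).2 (Nat.find_spec (hex i))
  push_cast
  linarith [neg_le_of_abs_le (hfq i (Nat.find (hex i)))]

lemma inv_of_pos (hf : ComputableFamily f) (hpos : ∀ i, 0 < f i) :
    ComputableFamily fun i => (f i)⁻¹ := by
  obtain ⟨l, hl, hlf⟩ := hf.exists_rat_pos_le hpos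
  obtain ⟨q, hq, hfq⟩ := hf
  have hl₂ : Computable₂ fun i (_ : ℕ) => l i := hl.comp .fst
  have he : Computable₂ fun i (n : ℕ) => (2 : ℚ) ^ (-(n : ℤ)) * (l i * l i)⁻¹ :=
    computable_rat_mul (computable_rat_two_pow_neg .snd)
      (computable_rat_inv (computable_rat_mul hl₂ hl₂))
  refine of_tendsto_zero (q := fun i n => (Max.max (q i n) (l i))⁻¹)
    (computable_rat_inv (computable_rat_max hq hl₂)) he (fun i n => ?_) fun i => ?_
  · obtain ⟨hl₀, hlf⟩ := hlf i
    have hl₀ : (0 : ℝ) < l i := mod_cast hl₀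
    set m : ℝ := Max.max (q i n : ℝ) (l i) with hm
    have hlm : (l i : ℝ) ≤ m := le_max_right _ _
    have hfm : |m - f i| ≤ 2 ^ (-(n : ℤ)) := by
      rw [abs_sub_comm, ← max_eq_left hlf, hm]
      exact (abs_max_sub_max_le_abs _ _ _).trans (hfq i n)
    push_cast
    rw [← hm, inv_sub_inv (hpos i).ne' (hl₀.trans_le hlm).ne', abs_div, ← div_eq_mul_inv,
      abs_of_pos (mul_pos (hpos i) (hl₀.trans_le hlm))]
    have hf₀ := (hpos i).le
    gcongr
  · simpa using tendsto_two_zpow_neg_natCast.mul_const ((l i * l i : ℝ)⁻¹)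

lemma inv (hf : ComputableFamily f) (hf₀ : ∀ i, f i ≠ 0) : ComputableFamily fun i => (f i)⁻¹ :=
  (hf.mul ((hf.mul hf).inv_of_pos fun i => mul_self_pos.2 (hf₀ i))).congr fun i => by
    rw [mul_inv, mul_inv_cancel_left₀ (hf₀ i)]

lemma sum_range {f : ι → ℕ → ℝ} (hf : ComputableFamily fun x : ι × ℕ => f x.1 x.2) {n : ι → ℕ}
    (hn : Computable n) : ComputableFamily fun i => ∑ j ∈ Finset.range (n i), f i j := by
  obtain ⟨q, hq, hfq⟩ := hf
  have hsum : Computable₂ fun i m => ∑ j ∈ Finset.range (n i), q (i, j) m :=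
    computable_rat_sum_range (q := fun (x : ι × ℕ) j => q (x.1, j) x.2)
      (hq.comp ((Computable.fst.comp .fst).pair .snd) (Computable.snd.comp .fst)) (hn.comp .fst)
  have he : Computable₂ fun i (m : ℕ) => (n i : ℚ) * 2 ^ (-(m : ℤ)) :=
    computable_rat_mul (computable_rat_natCast (hn.comp .fst)) (computable_rat_two_pow_neg .snd)
  refine of_tendsto_zero hsum he (fun i m => ?_) fun i => ?_
  · rw [Rat.cast_sum]
    push_cast
    rw [← Finset.sum_sub_distrib]
    calc |∑ j ∈ Finset.range (n i), (f i j - q (i, j) m)|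
        ≤ ∑ j ∈ Finset.range (n i), |f i j - q (i, j) m| := Finset.abs_sum_le_sum_abs _ _
      _ ≤ ∑ _j ∈ Finset.range (n i), (2 : ℝ) ^ (-(m : ℤ)) :=
         Finset.sum_le_sum fun j _ => hfq (i, j) m
      _ = n i * 2 ^ (-(m : ℤ)) := by rw [Finset.sum_const, Finset.card_range, nsmul_eq_mul]
  · simpa using tendsto_two_zpow_neg_natCast.const_mul (n i : ℝ)

lemma of_abs_sub_le {F E : ι → ℕ → ℝ} (hF : ComputableFamily fun x : ι × ℕ => F x.1 x.2)
    (hE : ComputableFamily fun x : ι × ℕ => E x.1 x.2) (hFE : ∀ i n, |f i - F i n| ≤ E i n)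
    (hlim : ∀ i, Tendsto (E i) atTop (𝓝 0)) : ComputableFamily f := by
  obtain ⟨p, hp, hFp⟩ := hF
  obtain ⟨q, hq, hEq⟩ := hE
  have hdiag {r : ι × ℕ → ℕ → ℚ} (hr : Computable₂ r) : Computable₂ fun i n => r (i, n) n :=
    Computable₂.comp hr .id .snd
  have he : Computable₂ fun (i : ι) (n : ℕ) => q (i, n) n + (2 ^ (-(n : ℤ)) + 2 ^ (-(n : ℤ))) :=
    computable_rat_add (hdiag hq)
      (computable_rat_add (computable_rat_two_pow_neg .snd) (computable_rat_two_pow_neg .snd))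
  refine of_tendsto_zero (q := fun i n => p (i, n) n) (hdiag hp) he (fun i n => ?_) fun i => ?_
  · push_cast
    linarith [abs_sub_le (f i) (F i n) (p (i, n) n), hFE i n, hFp (i, n) n,
      le_of_abs_le (hEq (i, n) n)]
  · have hq₀ : Tendsto (fun n => (q (i, n) n : ℝ)) atTop (𝓝 0) := by
      simpa using (hlim i).sub (squeeze_zero_norm (fun n => hEq (i, n) n)
        tendsto_two_zpow_neg_natCast)
    simpa using hq₀.add (tendsto_two_zpow_neg_natCast.add tendsto_two_zpow_neg_natCast)

end ComputableFamily

lemma abs_tsum_mul_sub_sum_range_le {a b : ℕ → ℝ} {ε : ℝ} {N : ℕ} (ha : Summable a)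
    (hab : Summable fun k => a k * b k) (hb : ∀ k, N ≤ k → |b k| ≤ ε) :
    |∑' k, a k * b k - ∑ k ∈ Finset.range N, a k * b k| ≤ (∑' k, |a k|) * ε := by
  have haN : Summable fun k => |a (k + N)| := (summable_nat_add_iff N).2 ha.abs
  have hε : 0 ≤ ε := (abs_nonneg _).trans (hb N le_rfl)
  have hterm : ∀ k, ‖a (k + N) * b (k + N)‖ ≤ |a (k + N)| * ε := fun k => by
    rw [Real.norm_eq_abs, abs_mul]
    exact mul_le_mul_of_nonneg_left (hb _ (Nat.le_add_left N k)) (abs_nonneg _)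
  have hshift : ∑' k, |a (k + N)| ≤ ∑' k, |a k| := by
    rw [← ha.abs.sum_add_tsum_nat_add N]
    exact le_add_of_nonneg_left (Finset.sum_nonneg fun k _ => abs_nonneg _)
  rw [← hab.sum_add_tsum_nat_add N, add_sub_cancel_left]
  calc |∑' k, a (k + N) * b (k + N)|
      ≤ ∑' k, |a (k + N)| * ε := tsum_of_norm_bounded (haN.mul_right ε).hasSum hterm
    _ = (∑' k, |a (k + N)|) * ε := tsum_mul_right
    _ ≤ (∑' k, |a k|) * ε := mul_le_mul_of_nonneg_right hshift hε

lemma isComputableReal_tsum_mul {a b δ : ℕ → ℝ} (ha : ComputableFamily a) (hb : ComputableFamily b)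
    (hδ : ComputableFamily δ) (hsum : Summable a) (hbδ : ∀ N k, N ≤ k → |b k| ≤ δ N)
    (hlim : Tendsto δ atTop (𝓝 0)) : IsComputableReal (∑' k, a k * b k) := by
  obtain ⟨A, hA⟩ := exists_nat_ge (∑' k, |a k|)
  have hab : Summable fun k => a k * b k :=
    .of_norm_bounded (hsum.abs.mul_right (δ 0)) fun k => by
      rw [Real.norm_eq_abs, abs_mul]
      exact mul_le_mul_of_nonneg_left (hbδ 0 k k.zero_le) (abs_nonneg _)
  have htail : ∀ N, |∑' k, a k * b k - ∑ k ∈ Finset.range N, a k * b k| ≤ A * δ N := fun N =>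
    (abs_tsum_mul_sub_sum_range_le hsum hab (hbδ N)).trans <|
      mul_le_mul_of_nonneg_right hA ((abs_nonneg _).trans (hbδ N N le_rfl))
  have hpartial : ComputableFamily fun x : Unit × ℕ => ∑ k ∈ Finset.range x.2, a k * b k :=
    ComputableFamily.sum_range (f := fun _ k => a k * b k) ((ha.mul hb).comp .snd) .snd
  have herror : ComputableFamily fun x : Unit × ℕ => A * δ x.2 :=
    (ComputableFamily.natCast (.const A)).mul (hδ.comp .snd)
  exact (ComputableFamily.of_abs_sub_le (F := fun _ N => ∑ k ∈ Finset.range N, a k * b k)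
    (E := fun _ N => A * δ N) hpartial herror (fun _ => htail)
    fun _ => by simpa using hlim.const_mul (A : ℝ)).isComputableReal ()

end ComputableFamily

section RiemannSum

open scoped NNReal

/-- The nodes of the partition of `[a, b]` into `n + 1` cells of equal length, for
`0 ≤ j ≤ n + 1`. -/
noncomputable def uniformNode (a b : ℝ) (n j : ℕ) : ℝ :=
  a + j * ((b - a) * (n + 1 : ℝ)⁻¹)

/-- The Riemann sum of `f` at the left endpoints of the cells of the partition of `[a, b]` into
`n + 1` cells, so that there is no degenerate case `n = 0`. -/
noncomputable def leftRiemannSum (f : ℝ → ℝ) (a b : ℝ) (n : ℕ) : ℝ :=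
  ∑ j ∈ Finset.range (n + 1), (b - a) * (n + 1 : ℝ)⁻¹ * f (uniformNode a b n j)

variable {f : ℝ → ℝ} {a b : ℝ} {K : ℝ≥0}

lemma uniformNode_zero (a b : ℝ) (n : ℕ) : uniformNode a b n 0 = a := by
  simp only [uniformNode, Nat.cast_zero, zero_mul, add_zero]

lemma uniformNode_succ_self (a b : ℝ) (n : ℕ) : uniformNode a b n (n + 1) = b := by
  simp only [uniformNode, Nat.cast_add_one]
  field_simp
  ring

lemma uniformNode_succ_sub (a b : ℝ) (n j : ℕ) :
    uniformNode a b n (j + 1) - uniformNode a b n j = (b - a) * (n + 1 : ℝ)⁻¹ := by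
  simp only [uniformNode, Nat.cast_add_one]
  ring

lemma uniformNode_mono (hab : a ≤ b) (n : ℕ) : Monotone (uniformNode a b n) :=
  monotone_nat_of_le_succ fun j => sub_nonneg.1 <| by
    rw [uniformNode_succ_sub]
    exact mul_nonneg (sub_nonneg.2 hab) (by positivity)

lemma le_uniformNode (hab : a ≤ b) (n j : ℕ) : a ≤ uniformNode a b n j := by
  simpa only [uniformNode_zero] using uniformNode_mono hab n j.zero_le

lemma uniformNode_le (hab : a ≤ b) {n j : ℕ} (hj : j ≤ n + 1) : uniformNode a b n j ≤ b := by
  simpa only [uniformNode_succ_self] using uniformNode_mono hab n hj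

lemma abs_integral_sub_mul_le_of_lipschitzOnWith (hab : a ≤ b)
    (hf : LipschitzOnWith K f (Set.Icc a b)) :
    |(∫ x in a..b, f x) - (b - a) * f a| ≤ K * (b - a) ^ 2 := by
  have hint : IntervalIntegrable f volume a b :=
    (hf.continuousOn.mono (Set.uIcc_of_le hab).subset).intervalIntegrable
  have hbound : ∀ x ∈ Set.uIoc a b, ‖f x - f a‖ ≤ K * (b - a) := fun x hx => by
    rw [Set.uIoc_of_le hab] at hx
    rw [← dist_eq_norm]
    refine (hf.dist_le_mul x (Set.Ioc_subset_Icc_self hx) a (Set.left_mem_Icc.2 hab)).trans ?_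
    rw [Real.dist_eq, abs_of_nonneg (sub_nonneg.2 hx.1.le)]
    gcongr
    exact hx.2
  have h := intervalIntegral.norm_integral_le_of_norm_le_const hbound
  rwa [intervalIntegral.integral_sub hint intervalIntegrable_const, intervalIntegral.integral_const,
    smul_eq_mul, abs_of_nonneg (sub_nonneg.2 hab), mul_assoc, ← sq] at h

lemma abs_integral_sub_leftRiemannSum_le_of_lipschitzOnWith (hab : a ≤ b)
    (hf : LipschitzOnWith K f (Set.Icc a b)) (n : ℕ) :
    |(∫ x in a..b, f x) - leftRiemannSum f a b n| ≤ K * (b - a) ^ 2 * (n + 1 : ℝ)⁻¹ := by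
  have hmono := uniformNode_mono hab n
  have hcell : ∀ j < n + 1, LipschitzOnWith K f
      (Set.Icc (uniformNode a b n j) (uniformNode a b n (j + 1))) := fun j hj =>
    hf.mono (Set.Icc_subset_Icc (le_uniformNode hab n j) (uniformNode_le hab hj))
  have hsum : ∑ j ∈ Finset.range (n + 1), ∫ x in uniformNode a b n j..uniformNode a b n (j + 1), f x
      = ∫ x in a..b, f x := by
    rw [intervalIntegral.sum_integral_adjacent_intervals fun j hj =>
      ((hcell j hj).continuousOn.mono
        (Set.uIcc_of_le (hmono j.le_succ)).subset).intervalIntegrable,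
      uniformNode_zero, uniformNode_succ_self]
  rw [← hsum, leftRiemannSum, ← Finset.sum_sub_distrib]
  refine (Finset.abs_sum_le_sum_abs _ _).trans ?_
  calc ∑ j ∈ Finset.range (n + 1), |(∫ x in uniformNode a b n j..uniformNode a b n (j + 1), f x)
          - (b - a) * (n + 1 : ℝ)⁻¹ * f (uniformNode a b n j)|
      ≤ ∑ _j ∈ Finset.range (n + 1), K * ((b - a) * (n + 1 : ℝ)⁻¹) ^ 2 :=
        Finset.sum_le_sum fun j hj => by
          simpa only [uniformNode_succ_sub] using abs_integral_sub_mul_le_of_lipschitzOnWith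
            (hmono j.le_succ) (hcell j (Finset.mem_range.1 hj))
    _ = K * (b - a) ^ 2 * (n + 1 : ℝ)⁻¹ := by
        rw [Finset.sum_const, Finset.card_range, nsmul_eq_mul, Nat.cast_add_one]
        field_simp

lemma lipschitzOnWith_inv_Ici_one : LipschitzOnWith 1 (fun x : ℝ => x⁻¹) (Set.Ici 1) := by
  refine .of_dist_le_mul fun x (hx : 1 ≤ x) y (hy : 1 ≤ y) => ?_
  have hx₀ : 0 < x := one_pos.trans_le hx
  have hy₀ : 0 < y := one_pos.trans_le hy
  rw [Real.dist_eq, inv_sub_inv hx₀.ne' hy₀.ne', abs_div, abs_of_pos (mul_pos hx₀ hy₀),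
    NNReal.coe_one, one_mul, dist_comm, Real.dist_eq]
  exact div_le_self (abs_nonneg _) (one_le_mul_of_one_le_of_one_le hx hy)

end RiemannSum

namespace ComputableFamily

variable {ι : Type} [Primcodable ι] {a b : ι → ℝ}

lemma uniformMesh (ha : ComputableFamily a) (hb : ComputableFamily b) :
    ComputableFamily fun x : ι × ℕ => (b x.1 - a x.1) * (x.2 + 1 : ℝ)⁻¹ :=
  ((hb.sub ha).comp .fst).mul <| inv_of_pos
    (by simpa using natCast (Computable.succ.comp Computable.snd)) fun x => by positivity

lemma uniformNode (ha : ComputableFamily a) (hb : ComputableFamily b) :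
    ComputableFamily fun y : (ι × ℕ) × ℕ => uniformNode (a y.1.1) (b y.1.1) y.1.2 y.2 :=
  (ha.comp (Computable.fst.comp .fst)).add ((natCast .snd).mul ((uniformMesh ha hb).comp .fst))

lemma leftRiemannSum {f : ι → ℝ → ℝ} (ha : ComputableFamily a) (hb : ComputableFamily b)
    (hab : ∀ i, a i ≤ b i)
    (hf : ∀ {κ : Type} [Primcodable κ] {i : κ → ι} {x : κ → ℝ}, Computable i → ComputableFamily x →
      (∀ k, x k ∈ Set.Icc (a (i k)) (b (i k))) → ComputableFamily fun k => f (i k) (x k)) :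
    ComputableFamily fun x : ι × ℕ => leftRiemannSum (f x.1) (a x.1) (b x.1) x.2 := by
  -- Capping the node at `b` extends it to indices beyond the partition, where `hf` is unavailable.
  have hcapped := hf (Computable.fst.comp .fst)
    ((uniformNode ha hb).min (hb.comp (Computable.fst.comp .fst))) fun y =>
      ⟨le_min (le_uniformNode (hab _) _ _) (hab _), min_le_right _ _⟩
  refine (sum_range (f := fun (x : ι × ℕ) j => (b x.1 - a x.1) * (x.2 + 1 : ℝ)⁻¹ *
      f x.1 (Min.min (_root_.uniformNode (a x.1) (b x.1) x.2 j) (b x.1)))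
    (((uniformMesh ha hb).comp .fst).mul hcapped) (Computable.succ.comp Computable.snd)).congr
    fun x => Finset.sum_congr rfl fun j hj => ?_
  rw [min_eq_left (uniformNode_le (hab _) (Finset.mem_range.1 hj).le)]

lemma intervalIntegral {f : ι → ℝ → ℝ} {K : ι → ℕ} (ha : ComputableFamily a)
    (hb : ComputableFamily b) (hab : ∀ i, a i ≤ b i) (hK : Computable K)
    (hlip : ∀ i, LipschitzOnWith (K i) (f i) (Set.Icc (a i) (b i)))
    (hf : ∀ {κ : Type} [Primcodable κ] {i : κ → ι} {x : κ → ℝ}, Computable i → ComputableFamily x →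
      (∀ k, x k ∈ Set.Icc (a (i k)) (b (i k))) → ComputableFamily fun k => f (i k) (x k)) :
    ComputableFamily fun i => ∫ x in a i..b i, f i x := by
  have herror : ComputableFamily fun x : ι × ℕ => K x.1 * (b x.1 - a x.1) ^ 2 * (x.2 + 1 : ℝ)⁻¹ :=
    (((natCast hK).mul (hb.sub ha)).comp .fst |>.mul (uniformMesh ha hb)).congr fun x => by ring
  refine of_abs_sub_le (F := fun i n => _root_.leftRiemannSum (f i) (a i) (b i) n)
    (E := fun i n => K i * (b i - a i) ^ 2 * (n + 1 : ℝ)⁻¹) (leftRiemannSum ha hb hab hf) herror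
    (fun i n => by simpa using
      abs_integral_sub_leftRiemannSum_le_of_lipschitzOnWith (hab i) (hlip i) n) fun i => ?_
  simpa [one_div] using
    (tendsto_one_div_add_atTop_nhds_zero_nat (𝕜 := ℝ)).const_mul (K i * (b i - a i) ^ 2)

lemma log_of_one_le {y : ι → ℝ} (hy : ComputableFamily y) (h₁ : ∀ i, 1 ≤ y i) :
    ComputableFamily fun i => Real.log (y i) := by
  refine (intervalIntegral (a := fun _ => 1) (K := fun _ => 1) (f := fun _ x => x⁻¹)
    (by simpa using natCast (.const 1)) hy h₁ (.const 1)
    (fun i => by simpa using lipschitzOnWith_inv_Ici_one.mono Set.Icc_subset_Ici_self)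
    fun _ hx hmem => hx.inv_of_pos fun k => one_pos.trans_le (hmem k).1).congr fun i => ?_
  rw [integral_inv_of_pos one_pos (one_pos.trans_le (h₁ i)), div_one]

lemma log {y : ι → ℝ} (hy : ComputableFamily y) (hpos : ∀ i, 0 < y i) :
    ComputableFamily fun i => Real.log (y i) := by
  have hone : ComputableFamily fun _ : ι => (1 : ℝ) := by simpa using natCast (.const 1)
  refine (((hy.max hone).log_of_one_le fun i => le_max_right _ _).sub
    (((hy.inv_of_pos hpos).max hone).log_of_one_le fun i => le_max_right _ _)).congr fun i => ?_
  rcases le_total 1 (y i) with h | h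
  · rw [max_eq_left h, max_eq_right (inv_le_one_of_one_le₀ h), Real.log_one, sub_zero]
  · rw [max_eq_right h, max_eq_left ((one_le_inv₀ (hpos i)).2 h), Real.log_one, zero_sub,
      Real.log_inv, neg_neg]

end ComputableFamily

section Lipschitz

open scoped NNReal

lemma lipschitzOnWith_mul_of_norm_le {X R : Type*} [PseudoMetricSpace X] [SeminormedRing R]
    {s : Set X} {f g : X → R} {Kf Kg A B : ℝ≥0} (hf : LipschitzOnWith Kf f s)
    (hg : LipschitzOnWith Kg g s) (hA : ∀ x ∈ s, ‖f x‖ ≤ A) (hB : ∀ x ∈ s, ‖g x‖ ≤ B) :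
    LipschitzOnWith (A * Kg + Kf * B) (fun x => f x * g x) s := by
  refine .of_dist_le_mul fun x hx y hy => ?_
  have hfxy := hf.dist_le_mul x hx y hy
  have hgxy := hg.dist_le_mul x hx y hy
  rw [dist_eq_norm] at hfxy hgxy ⊢
  calc ‖f x * g x - f y * g y‖
      = ‖f x * (g x - g y) + (f x - f y) * g y‖ := by noncomm_ring
    _ ≤ ‖f x‖ * ‖g x - g y‖ + ‖f x - f y‖ * ‖g y‖ :=
      (norm_add_le _ _).trans (add_le_add (norm_mul_le _ _) (norm_mul_le _ _))
    _ ≤ A * (Kg * dist x y) + Kf * dist x y * B := by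
      gcongr
      exacts [hA x hx, hB y hy]
    _ = (A * Kg + Kf * B : ℝ≥0) * dist x y := by push_cast; ring

lemma lipschitzOnWith_log_Ici_one : LipschitzOnWith 1 Real.log (Set.Ici 1) := by
  refine (convex_Ici 1).lipschitzOnWith_of_nnnorm_hasDerivWithin_le
    (fun x (hx : 1 ≤ x) => (Real.hasDerivAt_log (by positivity)).hasDerivWithinAt)
    fun x (hx : 1 ≤ x) => ?_
  rw [nnnorm_inv, Real.nnnorm_of_nonneg (by positivity)]
  exact inv_le_one_of_one_le₀ hx

lemma norm_inv_le_one {x : ℝ} (hx : x ∈ Set.Ici 1) : ‖x⁻¹‖ ≤ (1 : ℝ≥0) := by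
  rw [Real.norm_of_nonneg (inv_nonneg.2 (zero_le_one.trans hx)), NNReal.coe_one]
  exact inv_le_one_of_one_le₀ hx

lemma mapsTo_one_add_mul_inv_sq {s : ℝ} (hs : 0 ≤ s) :
    Set.MapsTo (fun α : ℝ => 1 + s * (α⁻¹ * α⁻¹)) (Set.Ici 1) (Set.Ici 1) := fun _ _ =>
  le_add_of_nonneg_right (mul_nonneg hs (mul_self_nonneg _))

lemma lipschitzOnWith_log_one_add_div_sq {s : ℝ≥0} :
    LipschitzOnWith (s * 2) (fun α : ℝ => Real.log (1 + s / α ^ 2)) (Set.Ici 1) := by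
  have hinner : LipschitzOnWith (s * 2) (fun α : ℝ => 1 + s * (α⁻¹ * α⁻¹)) (Set.Ici 1) := by
    refine .of_dist_le_mul fun x hx y hy => ?_
    have h := (lipschitzOnWith_mul_of_norm_le lipschitzOnWith_inv_Ici_one
      lipschitzOnWith_inv_Ici_one (fun _ => norm_inv_le_one)
      fun _ => norm_inv_le_one).dist_le_mul x hx y hy
    rw [Real.dist_eq] at h ⊢
    rw [add_sub_add_left_eq_sub, ← mul_sub, abs_mul, NNReal.abs_eq, NNReal.coe_mul, mul_assoc]
    refine mul_le_mul_of_nonneg_left (h.trans_eq ?_) s.2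
    norm_num
  simpa only [one_mul, Function.comp_def, div_eq_mul_inv, sq, mul_inv] using
    lipschitzOnWith_log_Ici_one.comp hinner (mapsTo_one_add_mul_inv_sq s.2)

lemma abs_log_one_add_div_sq_le {s α : ℝ} (hs : 0 ≤ s) (hα : 1 ≤ α) :
    |Real.log (1 + s / α ^ 2)| ≤ s := by
  have hdiv : 0 ≤ s / α ^ 2 := by positivity
  rw [abs_of_nonneg (Real.log_nonneg (le_add_of_nonneg_right hdiv))]
  calc Real.log (1 + s / α ^ 2) ≤ s / α ^ 2 := by
        linarith [Real.log_le_sub_one_of_pos (add_pos_of_pos_of_nonneg one_pos hdiv)]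
    _ ≤ s := div_le_self hs (one_le_pow₀ hα)

end Lipschitz

/-- Computability of `f` on `s` in the sense of Banach and Mazur: `f` sends uniformly computable
families of points of `s` to uniformly computable families. -/
def ComputableOn (f : ℝ → ℝ) (s : Set ℝ) : Prop :=
  ∀ ⦃ι : Type⦄ [Primcodable ι] ⦃x : ι → ℝ⦄, ComputableFamily x → (∀ i, x i ∈ s) →
    ComputableFamily fun i => f (x i)

lemma computableOn_const {c : ℝ} (hc : IsComputableReal c) (s : Set ℝ) :
    ComputableOn (fun _ => c) s := fun _ _ _ _ _ => .const hc

lemma computableOn_log_one_add_div_sq {s : ℝ} (hs : 0 ≤ s) (hsc : IsComputableReal s) :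
    ComputableOn (fun α => Real.log (1 + s / α ^ 2)) (Set.Ici 1) := fun _ _ x hx h₁ => by
  have hinv := hx.inv_of_pos fun i => one_pos.trans_le (h₁ i)
  exact ((((ComputableFamily.natCast (.const 1)).add
    ((ComputableFamily.const hsc).mul (hinv.mul hinv))).log_of_one_le
      fun i => by simpa using mapsTo_one_add_mul_inv_sq hs (h₁ i))).congr fun i => by
        simp only [Nat.cast_one, div_eq_mul_inv, sq, mul_inv]

section InvMulSqLog

open scoped NNReal

/-- The common profile `1 / (c (log c)²)` of the functions `gM M`, which `gM M` follows on
`[3, M]`. -/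
noncomputable def invMulSqLog (c : ℝ) : ℝ := c⁻¹ * ((Real.log c)⁻¹ * (Real.log c)⁻¹)

lemma one_le_log_of_three_le {c : ℝ} (hc : 3 ≤ c) : 1 ≤ Real.log c :=
  (Real.le_log_iff_exp_le (three_pos.trans_le hc)).2
    ((Real.exp_one_lt_d9.trans (by norm_num)).le.trans hc)

lemma invMulSqLog_pos {c : ℝ} (hc : 3 ≤ c) : 0 < invMulSqLog c := by
  have hlog : 0 < Real.log c := one_pos.trans_le (one_le_log_of_three_le hc)
  exact mul_pos (by positivity) (by positivity)

lemma invMulSqLog_le_one {c : ℝ} (hc : 3 ≤ c) : invMulSqLog c ≤ 1 := by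
  have hlog := one_le_log_of_three_le hc
  have hinv : (Real.log c)⁻¹ ≤ 1 := inv_le_one_of_one_le₀ hlog
  exact mul_le_one₀ (inv_le_one_of_one_le₀ (by linarith)) (mul_self_nonneg _)
    (mul_le_one₀ hinv (by positivity) hinv)

lemma lipschitzOnWith_invMulSqLog : LipschitzOnWith 3 invMulSqLog (Set.Ici 3) := by
  have hsub : Set.Ici (3 : ℝ) ⊆ Set.Ici 1 := Set.Ici_subset_Ici.2 (by norm_num)
  have hlog : LipschitzOnWith 1 (fun c => (Real.log c)⁻¹) (Set.Ici 3) := by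
    simpa only [one_mul, Function.comp_def] using lipschitzOnWith_inv_Ici_one.comp
      (lipschitzOnWith_log_Ici_one.mono hsub) fun c hc => one_le_log_of_three_le hc
  have hbound : ∀ c ∈ Set.Ici (3 : ℝ), ‖(Real.log c)⁻¹‖ ≤ (1 : ℝ≥0) := fun c hc =>
    norm_inv_le_one (one_le_log_of_three_le hc)
  have hsq := lipschitzOnWith_mul_of_norm_le hlog hlog hbound hbound
  have h := lipschitzOnWith_mul_of_norm_le (B := 1) (lipschitzOnWith_inv_Ici_one.mono hsub) hsq
    (fun c hc => norm_inv_le_one (hsub hc)) fun c hc => by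
      rw [norm_mul, NNReal.coe_one]
      exact mul_le_one₀ (hbound c hc) (norm_nonneg _) (hbound c hc)
  exact h.weaken (by norm_num)

lemma ComputableFamily.invMulSqLog {ι : Type} [Primcodable ι] {c : ι → ℝ}
    (hc : ComputableFamily c) (h₃ : ∀ i, 3 ≤ c i) :
    ComputableFamily fun i => invMulSqLog (c i) := by
  have hpos : ∀ i, 0 < c i := fun i => three_pos.trans_le (h₃ i)
  have hlog := (hc.log hpos).inv_of_pos fun i => one_pos.trans_le (one_le_log_of_three_le (h₃ i))
  exact (hc.inv_of_pos hpos).mul (hlog.mul hlog)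

end InvMulSqLog

section GM

open scoped NNReal

variable {M : ℕ} {α : ℝ}

/-- The trapezoid `min 1 (min (α - 2) (M + 1 - α))`, cut off at `0`, which accounts for the linear
ramps of `gM M` at both ends of its support. -/
noncomputable def trapezoid (M : ℕ) (α : ℝ) : ℝ := max 0 (min 1 (min (α - 2) (M + 1 - α)))

/-- The projection of the real line onto `[3, M]`, for `M ≥ 3`. -/
noncomputable def clampIcc (M : ℕ) (α : ℝ) : ℝ := max 3 (min α M)

lemma gM_eq_trapezoid_mul (hM : 3 ≤ M) (α : ℝ) :
    gM M α = trapezoid M α * invMulSqLog (clampIcc M α) := by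
  have hM' : (3 : ℝ) ≤ M := by exact_mod_cast hM
  unfold gM trapezoid clampIcc invMulSqLog
  split_ifs with h₂ h₃ hα hα'
  · rw [min_eq_right (by linarith [min_le_left (α - 2) (M + 1 - α)] :
      min (α - 2) (M + 1 - α) ≤ 1), min_eq_left (by linarith), max_eq_left (by linarith), zero_mul]
  · rw [min_eq_left (by linarith : α - 2 ≤ M + 1 - α), min_eq_right (by linarith),
      max_eq_right (by linarith), min_eq_left (by linarith), max_eq_left h₃]
    field_simp
  · rw [min_eq_left (le_min (by linarith) (by linarith)), max_eq_right zero_le_one,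
      min_eq_left hα, max_eq_right (by linarith)]
    field_simp
  · rw [min_eq_right (by linarith : (M : ℝ) + 1 - α ≤ α - 2), min_eq_right (by linarith),
      max_eq_right (by linarith), min_eq_right (by linarith), max_eq_right hM']
    field_simp
  · rw [min_eq_right (by linarith : (M : ℝ) + 1 - α ≤ α - 2), min_eq_right (by linarith),
      max_eq_left (by linarith), zero_mul]

lemma trapezoid_nonneg (M : ℕ) (α : ℝ) : 0 ≤ trapezoid M α := le_max_left _ _

lemma trapezoid_le_one (M : ℕ) (α : ℝ) : trapezoid M α ≤ 1 :=
  max_le zero_le_one (min_le_left _ _)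

lemma lipschitzWith_trapezoid (M : ℕ) : LipschitzWith 1 (trapezoid M) := by
  have hleft : LipschitzWith 1 fun α : ℝ => α - 2 :=
    (LipschitzWith.id.sub (.const 2)).weaken (by simp)
  have hright : LipschitzWith 1 fun α : ℝ => M + 1 - α :=
    ((LipschitzWith.const _).sub .id).weaken (by simp)
  exact (((hleft.min hright).const_min 1).const_max 0).weaken (by simp)

lemma three_le_clampIcc (M : ℕ) (α : ℝ) : 3 ≤ clampIcc M α := le_max_left _ _

lemma gM_nonneg (hM : 3 ≤ M) (α : ℝ) : 0 ≤ gM M α := by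
  rw [gM_eq_trapezoid_mul hM]
  exact mul_nonneg (trapezoid_nonneg M α) (invMulSqLog_pos (three_le_clampIcc M α)).le

lemma gM_le_one (hM : 3 ≤ M) (α : ℝ) : gM M α ≤ 1 := by
  rw [gM_eq_trapezoid_mul hM]
  exact mul_le_one₀ (trapezoid_le_one M α) (invMulSqLog_pos (three_le_clampIcc M α)).le
    (invMulSqLog_le_one (three_le_clampIcc M α))

lemma gM_eq_invMulSqLog (hα : α ∈ Set.Icc 3 (M : ℝ)) : gM M α = invMulSqLog α := by
  have hM : 3 ≤ M := by exact_mod_cast hα.1.trans hα.2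
  rw [gM_eq_trapezoid_mul hM, clampIcc, min_eq_left hα.2, max_eq_right hα.1, trapezoid,
    min_eq_left (le_min (by linarith [hα.1]) (by linarith [hα.2])), max_eq_right zero_le_one,
    one_mul]

lemma gM_eq_zero_of_notMem_Ioc (hM : 2 ≤ M) (hα : α ∉ Set.Ioc 2 ((M : ℝ) + 1)) : gM M α = 0 := by
  have hM' : (2 : ℝ) ≤ M := by exact_mod_cast hM
  rcases le_or_gt α 2 with h₂ | h₂
  · rw [gM, if_pos h₂]
  · have hlt : (M : ℝ) + 1 < α := lt_of_not_ge fun h => hα ⟨h₂, h⟩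
    rw [gM, if_neg (by linarith), if_neg (by linarith), if_neg (by linarith), if_neg (by linarith)]

lemma lipschitzWith_gM (hM : 3 ≤ M) : LipschitzWith 4 (gM M) := by
  have hclamp : LipschitzOnWith 1 (clampIcc M) Set.univ :=
    ((LipschitzWith.id.min_const (M : ℝ)).const_max 3).lipschitzOnWith
  have hprofile := lipschitzOnWith_invMulSqLog.comp hclamp fun α _ => three_le_clampIcc M α
  have h := lipschitzOnWith_mul_of_norm_le (A := 1) (B := 1)
    (lipschitzWith_trapezoid M).lipschitzOnWith hprofile
    (fun α _ => by
      rw [Real.norm_of_nonneg (trapezoid_nonneg M α)]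
      exact trapezoid_le_one M α)
    (fun α _ => by
      rw [Function.comp_apply, Real.norm_of_nonneg (invMulSqLog_pos (three_le_clampIcc M α)).le]
      exact invMulSqLog_le_one (three_le_clampIcc M α))
  rw [lipschitzOnWith_univ] at h
  exact funext (gM_eq_trapezoid_mul hM) ▸ h.weaken (by norm_num)

lemma ComputableFamily.gM {ι : Type} [Primcodable ι] {M : ι → ℕ} {x : ι → ℝ} (hM : Computable M)
    (hM₃ : ∀ i, 3 ≤ M i) (hx : ComputableFamily x) : ComputableFamily fun i => gM (M i) (x i) := by
  have hnat (n : ℕ) : ComputableFamily fun _ : ι => (n : ℝ) := natCast (.const n)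
  have htrapezoid : ComputableFamily fun i => trapezoid (M i) (x i) := by
    simpa only [trapezoid, Nat.cast_zero, Nat.cast_one, Nat.cast_ofNat] using (hnat 0).max
      ((hnat 1).min ((hx.sub (hnat 2)).min (((natCast hM).add (hnat 1)).sub hx)))
  have hclamp : ComputableFamily fun i => clampIcc (M i) (x i) := by
    simpa only [clampIcc, Nat.cast_ofNat] using (hnat 3).max (hx.min (natCast hM))
  exact (htrapezoid.mul (hclamp.invMulSqLog fun i => three_le_clampIcc _ _)).congr fun i =>
    (gM_eq_trapezoid_mul (hM₃ i) (x i)).symm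

end GM

section Moments

open scoped NNReal

/-- The integral of `w` against `gM M`, so that `Kconst M = gMoment M log`. -/
noncomputable def gMoment (M : ℕ) (w : ℝ → ℝ) : ℝ := ∫ α in Set.Ioi (0 : ℝ), gM M α * w α

/-- The lower bound `∫ α in 3..M, 1 / (α log α)` for `Kconst M`, in closed form. -/
noncomputable def logLogRatio (M : ℕ) : ℝ := Real.log (Real.log M / Real.log 3)

variable {M : ℕ} {w : ℝ → ℝ}

lemma gMoment_eq_intervalIntegral (hM : 2 ≤ M) (w : ℝ → ℝ) :
    gMoment M w = ∫ α in (2 : ℝ)..M + 1, gM M α * w α := by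
  have hM' : (2 : ℝ) ≤ M := by exact_mod_cast hM
  rw [gMoment, intervalIntegral.integral_of_le (by linarith)]
  refine setIntegral_eq_of_subset_of_forall_sdiff_eq_zero measurableSet_Ioi
    (fun α hα => two_pos.trans hα.1) fun α hα => ?_
  rw [gM_eq_zero_of_notMem_Ioc hM hα.2, zero_mul]

lemma intervalIntegrable_gM_mul (hM : 3 ≤ M) (hw : ContinuousOn w (Set.Ici 1)) {a b : ℝ}
    (ha : 1 ≤ a) (hb : 1 ≤ b) : IntervalIntegrable (fun α => gM M α * w α) volume a b :=
  ((lipschitzWith_gM hM).continuous.continuousOn.mul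
    (hw.mono fun _ hx => (le_min ha hb).trans hx.1)).intervalIntegrable

lemma intervalIntegrable_gM (hM : 3 ≤ M) (a b : ℝ) : IntervalIntegrable (gM M) volume a b :=
  (lipschitzWith_gM hM).continuous.intervalIntegrable a b

lemma integrableOn_gM_mul (hM : 3 ≤ M) (hw : ContinuousOn w (Set.Ici 1)) :
    IntegrableOn (fun α => gM M α * w α) (Set.Ioi 0) := by
  have hM' : (3 : ℝ) ≤ M := by exact_mod_cast hM
  refine ((intervalIntegrable_iff_integrableOn_Ioc_of_le (by linarith)).1
    (intervalIntegrable_gM_mul hM hw one_le_two (by linarith : (1 : ℝ) ≤ M + 1))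
      ).of_forall_sdiff_eq_zero measurableSet_Ioi fun α hα => ?_
  rw [gM_eq_zero_of_notMem_Ioc (by lia) hα.2, zero_mul]

lemma integral_Icc_gM (hM : 3 ≤ M) :
    ∫ α in (3 : ℝ)..M, gM M α = (Real.log 3)⁻¹ - (Real.log M)⁻¹ := by
  have hM' : (3 : ℝ) ≤ M := by exact_mod_cast hM
  have hderiv : ∀ α ∈ Set.uIcc (3 : ℝ) M, HasDerivAt (fun c => -(Real.log c)⁻¹) (gM M α) α :=
    fun α hα => by
      rw [Set.uIcc_of_le hM'] at hα
      have hlog : Real.log α ≠ 0 := (one_pos.trans_le (one_le_log_of_three_le hα.1)).ne'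
      refine ((Real.hasDerivAt_log (three_pos.trans_le hα.1).ne').inv hlog).neg.congr_deriv ?_
      rw [gM_eq_invMulSqLog hα, invMulSqLog]
      field_simp
  rw [intervalIntegral.integral_eq_sub_of_hasDerivAt hderiv (intervalIntegrable_gM hM _ _)]
  ring

lemma integral_Icc_gM_mul_log (hM : 3 ≤ M) :
    ∫ α in (3 : ℝ)..M, gM M α * Real.log α = logLogRatio M := by
  have hM' : (3 : ℝ) ≤ M := by exact_mod_cast hM
  have hderiv : ∀ α ∈ Set.uIcc (3 : ℝ) M,
      HasDerivAt (fun c => Real.log (Real.log c)) (gM M α * Real.log α) α := fun α hα => by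
    rw [Set.uIcc_of_le hM'] at hα
    have hlog : Real.log α ≠ 0 := (one_pos.trans_le (one_le_log_of_three_le hα.1)).ne'
    refine ((Real.hasDerivAt_log (three_pos.trans_le hα.1).ne').log hlog).congr_deriv ?_
    rw [gM_eq_invMulSqLog hα, invMulSqLog]
    field_simp
  rw [intervalIntegral.integral_eq_sub_of_hasDerivAt hderiv
    (intervalIntegrable_gM_mul hM lipschitzOnWith_log_Ici_one.continuousOn (by norm_num)
      (by linarith)), logLogRatio, Real.log_div] <;>
  exact (one_pos.trans_le (one_le_log_of_three_le (by linarith))).ne'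

lemma integral_Icc_gM_mul_le_gMoment (hM : 3 ≤ M) (hw : ContinuousOn w (Set.Ici 1))
    (hw₀ : ∀ α, 1 ≤ α → 0 ≤ w α) : ∫ α in (3 : ℝ)..M, gM M α * w α ≤ gMoment M w := by
  have hM' : (3 : ℝ) ≤ M := by exact_mod_cast hM
  rw [gMoment_eq_intervalIntegral (by lia)]
  refine intervalIntegral.integral_mono_interval (by norm_num) hM' (by linarith) ?_
    (intervalIntegrable_gM_mul hM hw one_le_two (by linarith))
  filter_upwards [ae_restrict_mem measurableSet_Ioc] with α hα
  exact mul_nonneg (gM_nonneg hM α) (hw₀ α (by linarith [hα.1]))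

lemma gMoment_one_pos (hM : 3 < M) : 0 < gMoment M fun _ => 1 := by
  have hM' : (3 : ℝ) < M := by exact_mod_cast hM
  have h := integral_Icc_gM_mul_le_gMoment hM.le continuousOn_const fun _ _ => zero_le_one
  simp only [mul_one, integral_Icc_gM hM.le] at h
  refine lt_of_lt_of_le (sub_pos.2 ?_) h
  exact inv_strictAnti₀ (Real.log_pos (by norm_num)) (Real.log_lt_log three_pos hM')

lemma gMoment_one_le (hM : 3 ≤ M) : gMoment M (fun _ => 1) ≤ 3 := by
  have hM' : (3 : ℝ) ≤ M := by exact_mod_cast hM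
  have hint := intervalIntegrable_gM hM
  have hunit : ∀ a : ℝ, ∫ α in a..a + 1, gM M α ≤ 1 := fun a => by
    simpa using intervalIntegral.integral_mono_on (by linarith) (hint a (a + 1))
      intervalIntegrable_const fun α _ => gM_le_one hM α
  have hmiddle : ∫ α in (3 : ℝ)..M, gM M α ≤ 1 := by
    rw [integral_Icc_gM hM]
    have hlogM : 0 ≤ Real.log M := Real.log_nonneg (by linarith)
    linarith [inv_le_one_of_one_le₀ (one_le_log_of_three_le le_rfl), inv_nonneg.2 hlogM]
  have hfirst : ∫ α in (2 : ℝ)..3, gM M α ≤ 1 := by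
    convert hunit 2
    norm_num
  simp only [gMoment_eq_intervalIntegral (by lia : 2 ≤ M), mul_one]
  rw [← intervalIntegral.integral_add_adjacent_intervals (hint 2 M) (hint M (M + 1)),
    ← intervalIntegral.integral_add_adjacent_intervals (hint 2 3) (hint 3 M)]
  linarith [hunit M]

lemma logLogRatio_le_Kconst (hM : 3 ≤ M) : logLogRatio M ≤ Kconst M :=
  (integral_Icc_gM_mul_log hM).symm.trans_le <|
    integral_Icc_gM_mul_le_gMoment hM lipschitzOnWith_log_Ici_one.continuousOn
      fun _ => Real.log_nonneg

lemma logLogRatio_pos (hM : 3 < M) : 0 < logLogRatio M :=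
  Real.log_pos <| (one_lt_div (Real.log_pos (by norm_num))).2 <|
    Real.log_lt_log three_pos (by exact_mod_cast hM)

lemma logLogRatio_le_logLogRatio {N : ℕ} (hN : 3 ≤ N) (hNM : N ≤ M) :
    logLogRatio N ≤ logLogRatio M := by
  have hN' : (3 : ℝ) ≤ N := by exact_mod_cast hN
  have hlog₃ : 0 < Real.log 3 := Real.log_pos (by norm_num)
  have hlogN : 0 < Real.log N := one_pos.trans_le (one_le_log_of_three_le hN')
  exact Real.log_le_log (div_pos hlogN hlog₃) <| div_le_div_of_nonneg_right
    (Real.log_le_log (by linarith) (by exact_mod_cast hNM)) hlog₃.le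

lemma tendsto_logLogRatio : Tendsto logLogRatio atTop atTop :=
  Real.tendsto_log_atTop.comp <|
    (Real.tendsto_log_atTop.comp tendsto_natCast_atTop_atTop).atTop_div_const
      (Real.log_pos (by norm_num))

lemma Kconst_pos (hM : 3 < M) : 0 < Kconst M :=
  (logLogRatio_pos hM).trans_le (logLogRatio_le_Kconst hM.le)

lemma integral_norm_gM_mul_le (hM : 3 ≤ M) (hw : ContinuousOn w (Set.Ici 1)) {C : ℝ}
    (hC : ∀ α, 1 ≤ α → |w α| ≤ C) : ∫ α in Set.Ioi (0 : ℝ), ‖gM M α * w α‖ ≤ 3 * C := by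
  have hC₀ : 0 ≤ C := (abs_nonneg _).trans (hC 1 le_rfl)
  have hpointwise : ∀ α, ‖gM M α * w α‖ ≤ gM M α * 1 * C := fun α => by
    rw [norm_mul, Real.norm_of_nonneg (gM_nonneg hM α), mul_one]
    rcases le_or_gt α 2 with hα | hα
    · rw [gM, if_pos hα, zero_mul, zero_mul]
    · exact mul_le_mul_of_nonneg_left (hC α (by linarith)) (gM_nonneg hM α)
  calc ∫ α in Set.Ioi (0 : ℝ), ‖gM M α * w α‖
      ≤ ∫ α in Set.Ioi (0 : ℝ), gM M α * 1 * C :=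
        integral_mono (integrableOn_gM_mul hM hw).norm
          ((integrableOn_gM_mul hM continuousOn_const).mul_const C) hpointwise
    _ = gMoment M (fun _ => 1) * C := integral_mul_const _ _
    _ ≤ 3 * C := mul_le_mul_of_nonneg_right (gMoment_one_le hM) hC₀

lemma exists_computable_lipschitzOnWith_gM_mul {K : ℝ≥0} (hw : LipschitzOnWith K w (Set.Ici 1)) :
    ∃ L : ℕ → ℕ, Computable L ∧ ∀ M, 3 ≤ M →
      LipschitzOnWith (L M) (fun α => gM M α * w α) (Set.Icc 2 (M + 1)) := by
  obtain ⟨k, hk⟩ := exists_nat_ge K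
  obtain ⟨c, hc⟩ := exists_nat_ge |w 1|
  refine ⟨fun M => k + 4 * (c + k * M), computable_nat_add (.const k) (computable_nat_mul (.const 4)
    (computable_nat_add (.const c) (computable_nat_mul (.const k) .id))), fun M hM => ?_⟩
  have hsub : Set.Icc 2 ((M : ℝ) + 1) ⊆ Set.Ici 1 := fun α hα => one_le_two.trans hα.1
  have hbound : ∀ α ∈ Set.Icc 2 ((M : ℝ) + 1), ‖w α‖ ≤ (c + k * M : ℝ≥0) := fun α hα => by
    have hdist := hw.dist_le_mul α (hsub hα) 1 Set.self_mem_Ici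
    have hk' : (K : ℝ) ≤ k := by exact_mod_cast hk
    rw [Real.dist_eq, Real.dist_eq, abs_of_nonneg (sub_nonneg.2 (hsub hα) : 0 ≤ α - 1)] at hdist
    have hgrowth : K * (α - 1) ≤ k * M :=
      mul_le_mul hk' (by linarith [hα.2]) (by linarith [hα.1]) k.cast_nonneg
    rw [Real.norm_eq_abs]
    push_cast
    linarith [abs_sub_abs_le_abs_sub (w α) (w 1)]
  have h := lipschitzOnWith_mul_of_norm_le (A := 1) (lipschitzWith_gM hM).lipschitzOnWith
    ((hw.mono hsub).weaken hk)
    (fun α _ => by simpa [abs_of_nonneg (gM_nonneg hM α)] using gM_le_one hM α) hbound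
  simpa using h

lemma computableFamily_gMoment {K : ℝ≥0} (hw : LipschitzOnWith K w (Set.Ici 1))
    (hwc : ComputableOn w (Set.Ici 1)) : ComputableFamily fun k => gMoment (k + 4) w := by
  obtain ⟨L, hL, hlip⟩ := exists_computable_lipschitzOnWith_gM_mul hw
  have hshift : Computable fun k : ℕ => k + 4 := computable_nat_add .id (.const 4)
  have htwo : ComputableFamily fun _ : ℕ => (2 : ℝ) := by
    simpa using ComputableFamily.natCast (.const 2)
  have hend : ComputableFamily fun k : ℕ => ((k + 4 : ℕ) : ℝ) + 1 := by
    simpa using ComputableFamily.natCast (Computable.succ.comp hshift)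
  refine (ComputableFamily.intervalIntegral (f := fun k α => gM (k + 4) α * w α) htwo hend
    (fun k => by push_cast; linarith [k.cast_nonneg (α := ℝ)]) (hL.comp hshift)
    (fun k => hlip (k + 4) (by lia)) fun {κ _ i x} hi hx hmem => ?_).congr fun k =>
      (gMoment_eq_intervalIntegral (by lia) w).symm
  exact (ComputableFamily.gM (hshift.comp hi) (fun _ => by lia) hx).mul
    (hwc hx fun k => one_le_two.trans (hmem k).1)

lemma computableFamily_Kconst : ComputableFamily fun k => Kconst (k + 4) :=
  computableFamily_gMoment lipschitzOnWith_log_Ici_one fun _ _ _ hx h₁ => hx.log_of_one_le h₁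

lemma computableFamily_logLogRatio : ComputableFamily fun k => logLogRatio (k + 4) := by
  have hlog₃ : ∀ _ : ℕ, 0 < Real.log 3 := fun _ => Real.log_pos (by norm_num)
  have hthree : ComputableFamily fun _ : ℕ => (3 : ℝ) := by
    simpa using ComputableFamily.natCast (.const 3)
  have hM : ComputableFamily fun k : ℕ => ((k + 4 : ℕ) : ℝ) :=
    .natCast (computable_nat_add .id (.const 4))
  have hlogM := hM.log_of_one_le fun k => by push_cast; linarith [k.cast_nonneg (α := ℝ)]
  refine ((hlogM.mul ((hthree.log fun _ => three_pos).inv_of_pos hlog₃)).log fun k =>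
    mul_pos ?_ (inv_pos.2 (hlog₃ k))).congr fun k => by rw [logLogRatio, div_eq_mul_inv]
  exact Real.log_pos (by push_cast; linarith [k.cast_nonneg (α := ℝ)])

end Moments

section Mixture

open scoped NNReal

variable {a : ℕ → ℝ} {w : ℝ → ℝ} {C : ℝ}

lemma integral_norm_gM_mul_div_Kconst_le (hw : ContinuousOn w (Set.Ici 1))
    (hC : ∀ α, 1 ≤ α → |w α| ≤ C) {N k : ℕ} (hNk : N ≤ k) :
    (∫ α in Set.Ioi (0 : ℝ), ‖gM (k + 4) α * w α‖) / Kconst (k + 4)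
      ≤ 3 * C / logLogRatio (N + 4) :=
  div_le_div₀ (mul_nonneg (by norm_num) ((abs_nonneg _).trans (hC 1 le_rfl)))
    (integral_norm_gM_mul_le (by lia) hw hC) (logLogRatio_pos (by lia))
    ((logLogRatio_le_logLogRatio (by lia) (by lia)).trans (logLogRatio_le_Kconst (by lia)))

lemma abs_gMoment_div_Kconst_le (hw : ContinuousOn w (Set.Ici 1))
    (hC : ∀ α, 1 ≤ α → |w α| ≤ C) {N k : ℕ} (hNk : N ≤ k) :
    |gMoment (k + 4) w / Kconst (k + 4)| ≤ 3 * C / logLogRatio (N + 4) := by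
  rw [abs_div, abs_of_pos (Kconst_pos (by lia)), ← Real.norm_eq_abs]
  exact (div_le_div_of_nonneg_right (norm_integral_le_integral_norm _)
    (Kconst_pos (by lia)).le).trans (integral_norm_gM_mul_div_Kconst_le hw hC hNk)

/-- The function `g* = ∑ₖ aₖ g_{k+4} / K_{k+4}`, for weights `a` in place of `2 ^ (-φ (k + 4))`. -/
noncomputable def gMixture (a : ℕ → ℝ) (α : ℝ) : ℝ :=
  ∑' k, a k * gM (k + 4) α / Kconst (k + 4)

lemma integral_gMixture_mul (ha : Summable a) (hw : ContinuousOn w (Set.Ici 1))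
    (hC : ∀ α, 1 ≤ α → |w α| ≤ C) :
    ∫ α in Set.Ioi (0 : ℝ), gMixture a α * w α
      = ∑' k, a k * (gMoment (k + 4) w / Kconst (k + 4)) := by
  let F : ℕ → ℝ → ℝ := fun k α => a k / Kconst (k + 4) * (gM (k + 4) α * w α)
  have hF : ∀ k, IntegrableOn (F k) (Set.Ioi 0) := fun k =>
    (integrableOn_gM_mul (by lia) hw).const_mul _
  have hnorm : ∀ k, ∫ α in Set.Ioi (0 : ℝ), ‖F k α‖
      = |a k| * ((∫ α in Set.Ioi (0 : ℝ), ‖gM (k + 4) α * w α‖) / Kconst (k + 4)) := fun k => by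
    simp only [F, norm_mul (a k / _), norm_div, Real.norm_eq_abs (a k),
      Real.norm_of_nonneg (Kconst_pos (by lia : 3 < k + 4)).le]
    rw [integral_const_mul, div_mul_eq_mul_div, mul_div_assoc]
  have hsum : Summable fun k => ∫ α in Set.Ioi (0 : ℝ), ‖F k α‖ :=
    .of_nonneg_of_le (fun k => integral_nonneg fun _ => norm_nonneg _) (fun k => by
      rw [hnorm]
      exact mul_le_mul_of_nonneg_left (integral_norm_gM_mul_div_Kconst_le hw hC k.zero_le)
        (abs_nonneg _)) (ha.abs.mul_right _)
  calc ∫ α in Set.Ioi (0 : ℝ), gMixture a α * w α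
      = ∫ α in Set.Ioi (0 : ℝ), ∑' k, F k α := integral_congr_ae <| .of_forall fun α => by
        simp only [gMixture, F, ← tsum_mul_right]
        exact tsum_congr fun k => by ring
    _ = ∑' k, ∫ α in Set.Ioi (0 : ℝ), F k α :=
        (integral_tsum_of_summable_integral_norm hF hsum).symm
    _ = ∑' k, a k * (gMoment (k + 4) w / Kconst (k + 4)) := tsum_congr fun k => by
        simp only [F, integral_const_mul, gMoment]
        ring

lemma isComputableReal_integral_gMixture_mul {K : ℝ≥0} (hac : ComputableFamily a) (ha : Summable a)
    (hw : LipschitzOnWith K w (Set.Ici 1)) (hwc : ComputableOn w (Set.Ici 1))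
    (hC : ∀ α, 1 ≤ α → |w α| ≤ C) :
    IsComputableReal (∫ α in Set.Ioi (0 : ℝ), gMixture a α * w α) := by
  obtain ⟨c, hc⟩ := exists_nat_ge C
  have hbound : ∀ α, 1 ≤ α → |w α| ≤ c := fun α hα => (hC α hα).trans hc
  have hratio : ComputableFamily fun k => gMoment (k + 4) w / Kconst (k + 4) := by
    simpa only [div_eq_mul_inv] using (computableFamily_gMoment hw hwc).mul
      (computableFamily_Kconst.inv_of_pos fun k => Kconst_pos (by lia))
  have hδ : ComputableFamily fun N => 3 * (c : ℝ) / logLogRatio (N + 4) := by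
    simpa only [div_eq_mul_inv, Nat.cast_mul, Nat.cast_ofNat] using
      (ComputableFamily.natCast (.const (3 * c))).mul
        (computableFamily_logLogRatio.inv_of_pos fun k => logLogRatio_pos (by lia))
  rw [integral_gMixture_mul ha hw.continuousOn hbound]
  exact isComputableReal_tsum_mul hac hratio hδ ha
    (fun N k => abs_gMoment_div_Kconst_le hw.continuousOn hbound)
    ((tendsto_logLogRatio.comp (tendsto_add_atTop_nat 4)).const_div_atTop _)

lemma isComputableReal_integral_gMixture (hac : ComputableFamily a) (ha : Summable a) :
    IsComputableReal (∫ α in Set.Ioi (0 : ℝ), gMixture a α) := by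
  have hone : IsComputableReal 1 := by
    simpa using (ComputableFamily.natCast (.const 1)).isComputableReal ()
  simpa only [mul_one] using isComputableReal_integral_gMixture_mul hac ha
    (LipschitzWith.const 1).lipschitzOnWith (computableOn_const hone _) (fun _ _ => abs_one.le)

lemma integral_gMixture_pos (ha : Summable a) (hpos : ∀ k, 0 < a k) :
    0 < ∫ α in Set.Ioi (0 : ℝ), gMixture a α := by
  have hC : ∀ α : ℝ, 1 ≤ α → |(1 : ℝ)| ≤ 1 := fun _ _ => abs_one.le
  have hsum : Summable fun k => a k * (gMoment (k + 4) (fun _ => 1) / Kconst (k + 4)) :=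
    .of_norm_bounded (ha.abs.mul_right _) fun k => by
      rw [Real.norm_eq_abs, abs_mul]
      exact mul_le_mul_of_nonneg_left
        (abs_gMoment_div_Kconst_le continuousOn_const hC k.zero_le) (abs_nonneg _)
  have hterm : ∀ k, 0 < a k * (gMoment (k + 4) (fun _ => 1) / Kconst (k + 4)) := fun k =>
    mul_pos (hpos k) (div_pos (gMoment_one_pos (by lia)) (Kconst_pos (by lia)))
  have h := integral_gMixture_mul ha continuousOn_const hC
  simp only [mul_one] at h
  exact h ▸ hsum.tsum_pos (fun k => (hterm k).le) 0 (hterm 0)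

end Mixture

namespace IsComputableReal

variable {x y : ℝ}

lemma mul (hx : IsComputableReal x) (hy : IsComputableReal y) : IsComputableReal (x * y) :=
  ((ComputableFamily.const hx).mul (.const hy)).isComputableReal ()

lemma inv (hx : IsComputableReal x) (hx₀ : x ≠ 0) : IsComputableReal x⁻¹ :=
  ((ComputableFamily.const hx).inv fun _ => hx₀).isComputableReal ()

lemma div (hx : IsComputableReal x) (hy : IsComputableReal y) (hy₀ : y ≠ 0) :
    IsComputableReal (x / y) :=
  div_eq_mul_inv x y ▸ hx.mul (hy.inv hy₀)

end IsComputableReal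

lemma integral_logb_mul_comp_abs (P σsq c : ℝ) (g : ℝ → ℝ) :
    ∫ α, Real.logb 2 (1 + σsq / (P * α ^ 2)) * (g |α| / (2 * c))
      = (∫ α in Set.Ioi (0 : ℝ), g α * Real.log (1 + σsq / P / α ^ 2)) / (Real.log 2 * c) := by
  have hsymm := integral_comp_abs (f := fun α =>
    Real.logb 2 (1 + σsq / (P * α ^ 2)) * (g α / (2 * c)))
  simp only [sq_abs] at hsymm
  rw [hsymm, ← integral_const_mul, ← integral_div]
  refine integral_congr_ae <| .of_forall fun α => ?_
  simp only [Real.logb, ← div_div σsq P]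
  ring

theorem stmt19_general {a : ℕ → ℝ} (hac : ComputableFamily a) (ha : Summable a)
    (hc₂ : ∫ α in Set.Ioi (0 : ℝ), gMixture a α ≠ 0) {P σsq : ℝ} (hP : 0 < P) (hσ : 0 ≤ σsq)
    (hPc : IsComputableReal P) (hσc : IsComputableReal σsq) :
    IsComputableReal (∫ α, Real.logb 2 (1 + σsq / (P * α ^ 2)) *
      (gMixture a |α| / (2 * ∫ β in Set.Ioi (0 : ℝ), gMixture a β))) := by
  have hs : 0 ≤ σsq / P := div_nonneg hσ hP.le
  have hlog2 : IsComputableReal (Real.log 2) :=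
    (ComputableFamily.log (.natCast (.const 2)) (by simp)).isComputableReal ()
  have hlog2₀ : Real.log 2 ≠ 0 := (Real.log_pos one_lt_two).ne'
  have hnum := isComputableReal_integral_gMixture_mul hac ha
    (lipschitzOnWith_log_one_add_div_sq (s := ⟨σsq / P, hs⟩))
    (computableOn_log_one_add_div_sq hs (hσc.div hPc hP.ne'))
    (fun _ => abs_log_one_add_div_sq_le hs)
  rw [integral_logb_mul_comp_abs]
  exact hnum.div (hlog2.mul (isComputableReal_integral_gMixture hac ha)) (mul_ne_zero hlog2₀ hc₂)

lemma computableFamily_two_zpow_neg {ι : Type} [Primcodable ι] {φ : ι → ℕ} (hφ : Computable φ) :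
    ComputableFamily fun k => (2 : ℝ) ^ (-(φ k : ℤ)) := by
  simpa using ComputableFamily.of_rat (computable_rat_two_pow_neg hφ)

lemma summable_two_zpow_neg {ι : Type*} {φ : ι → ℕ} (hφ : Function.Injective φ) :
    Summable fun k => (2 : ℝ) ^ (-(φ k : ℤ)) := by
  simpa [Function.comp_def] using summable_geometric_two.comp_injective hφ

/-- Lemma 2 of the paper: for the density `f*` constructed from an injective
computable `φ`, and all computable `P > 0`, `σ² > 0`, the number
`x* = ∫ log₂(1 + σ²/(Pα²)) f*(α) dα` is a computable real. -/
theorem stmt19 (φ : ℕ → ℕ) (hinj : Function.Injective φ) (hcomp : Computable φ)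
    (gstar : ℝ → ℝ)
    (hgstar : ∀ α, gstar α =
      ∑' k : ℕ, (2 : ℝ) ^ (-(φ (k + 4) : ℤ)) * gM (k + 4) α / Kconst (k + 4))
    (c₂ : ℝ) (hc₂ : c₂ = ∫ α in Set.Ioi (0 : ℝ), gstar α)
    (fstar : ℝ → ℝ) (hfstar : ∀ α, fstar α = gstar |α| / (2 * c₂))
    (P σsq : ℝ) (hP : 0 < P) (hσ : 0 < σsq)
    (hPc : IsComputableReal P) (hσc : IsComputableReal σsq) :
    IsComputableReal (∫ α, Real.logb 2 (1 + σsq / (P * α ^ 2)) * fstar α) := by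
  have hinj' : Function.Injective fun k => φ (k + 4) := hinj.comp (add_left_injective 4)
  have ha := summable_two_zpow_neg hinj'
  obtain rfl : gstar = gMixture _ := funext hgstar
  obtain rfl := funext hfstar
  subst hc₂
  exact stmt19_general
    (computableFamily_two_zpow_neg (hcomp.comp (computable_nat_add .id (.const 4)))) ha
    (integral_gMixture_pos ha fun _ => by positivity).ne' hP hσ.le hPc hσc
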